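/- arXiv:2506.08259 — 2 statements merged into one kernel-verified Lean document; each statement's English description precedes it below -/
import Mathlib

section
/- Let k ≥ 3, let a ∈ ℝ^{k-1} with a ≠ 0 and b ∈ ℝ, and let P0 = {π ∈ Δ_{k-1} : π i > 0 for all i, and ∑_{i=1}^{k-1} a_i · log(π_i / π_k) = b}. Then there exist a sample size n and an NTUB test of P0 against Δ_{k-1} \ P0 of sample size n if and only if there exist a' ∈ ℚ^{k-1} and b' ∈ ℝ such that P0 = {π ∈ Δ_{k-1} : π i > 0 for all i, and ∑_{i=1}^{k-1} a'_i · log(π_i / π_k) = b'}. -/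
open Finset

/-- The probability simplex on a finite index set `ι`. -/
def probSimplex (ι : Type) [Fintype ι] : Set (ι → ℝ) :=
  {π | (∀ i, 0 ≤ π i) ∧ ∑ i, π i = 1}

/-- Count vectors of sample size `n`: functions `x : ι → ℕ` with `∑ i, x i = n`. -/
def countVecs (ι : Type) [Fintype ι] [DecidableEq ι] (n : ℕ) : Finset (ι → ℕ) :=
  (Fintype.piFinset fun _ : ι => Finset.range (n + 1)).filter fun x => ∑ i, x i = n

/-- A (randomized) test of sample size `n`: values in `[0,1]` on all count vectors. -/
def IsTest (ι : Type) [Fintype ι] [DecidableEq ι] (n : ℕ) (φ : (ι → ℕ) → ℝ) : Prop :=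
  ∀ x ∈ countVecs ι n, 0 ≤ φ x ∧ φ x ≤ 1

/-- The power function of a test. -/
noncomputable def powerFn (ι : Type) [Fintype ι] [DecidableEq ι] (n : ℕ)
    (φ : (ι → ℕ) → ℝ) (π : ι → ℝ) : ℝ :=
  ∑ x ∈ countVecs ι n, φ x * (Nat.multinomial Finset.univ x : ℝ) * ∏ i, π i ^ x i

/-- Unbiasedness relative to the null hypothesis `P0`. -/
def Unbiased (ι : Type) [Fintype ι] [DecidableEq ι] (n : ℕ) (P0 : Set (ι → ℝ))
    (φ : (ι → ℕ) → ℝ) : Prop :=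
  ∀ π0 ∈ P0, ∀ πA ∈ probSimplex ι \ P0, powerFn ι n φ π0 ≤ powerFn ι n φ πA

/-- Non-trivial unbiased test: unbiased with non-constant power on the simplex. -/
def IsNTUB (ι : Type) [Fintype ι] [DecidableEq ι] (n : ℕ) (P0 : Set (ι → ℝ))
    (φ : (ι → ℕ) → ℝ) : Prop :=
  Unbiased ι n P0 φ ∧
    ∃ π ∈ probSimplex ι, ∃ π' ∈ probSimplex ι, powerFn ι n φ π ≠ powerFn ι n φ π'

/-- Strictly unbiased test. -/
def IsSUB (ι : Type) [Fintype ι] [DecidableEq ι] (n : ℕ) (P0 : Set (ι → ℝ))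
    (φ : (ι → ℕ) → ℝ) : Prop :=
  ∀ π0 ∈ P0, ∀ πA ∈ probSimplex ι \ P0, powerFn ι n φ π0 < powerFn ι n φ πA

/-- Level-`α` test. -/
def IsLevel (ι : Type) [Fintype ι] [DecidableEq ι] (n : ℕ) (P0 : Set (ι → ℝ)) (α : ℝ)
    (φ : (ι → ℕ) → ℝ) : Prop :=
  ∀ π ∈ P0, powerFn ι n φ π ≤ α

/-- A test has size `α` if the supremum of its power over `P0` is `α`. -/
def HasSize (ι : Type) [Fintype ι] [DecidableEq ι] (n : ℕ) (P0 : Set (ι → ℝ)) (α : ℝ)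
    (φ : (ι → ℕ) → ℝ) : Prop :=
  IsLUB (powerFn ι n φ '' P0) α

/-- Uniformly most powerful unbiased level-`α` test. -/
def IsUMPU (ι : Type) [Fintype ι] [DecidableEq ι] (n : ℕ) (P0 : Set (ι → ℝ)) (α : ℝ)
    (φ : (ι → ℕ) → ℝ) : Prop :=
  IsLevel ι n P0 α φ ∧ Unbiased ι n P0 φ ∧
    ∀ ψ, IsTest ι n ψ → IsLevel ι n P0 α ψ → Unbiased ι n P0 ψ →
      ∀ πA ∈ probSimplex ι \ P0, powerFn ι n ψ πA ≤ powerFn ι n φ πA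

/-!
Write a log-linear null hypothesis symmetrically as `∑ i, A i * log (π i) = b` with `∑ i, A i = 0`.

If an unbiased test exists, its power is by continuity a constant `c` on the null hypothesis. In the
softmax coordinates `π i ∝ exp (s i)` the null hypothesis is the affine hyperplane `A ⬝ᵥ s = b`, and
the power minus `c` is, up to a nonvanishing factor, a combination of the exponentials
`exp (x ⬝ᵥ s)` over the count vectors `x`. Since distinct exponentials are linearly independent, a
nonconstant power forces two count vectors `x ≠ y` to agree on the directions of the hyperplane, so
that `x - y` is an integral vector proportional to `A`.

Conversely, clearing denominators turns a rational equation into a binomial equation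
`∏ i, π i ^ u i = D * ∏ i, π i ^ v i` between monomials of the same degree, and the square of the
difference of the two sides is, after scaling and adding `1 / 2`, the power function of a test.
-/

open Matrix

section LinearAlgebra

lemma linearIndependent_exp_addMonoidHom (M : Type*) [AddZeroClass M] :
    LinearIndependent ℝ fun (f : M →+ ℝ) (s : M) ↦ Real.exp (f s) := by
  let character (f : M →+ ℝ) : Multiplicative M →* ℝ :=
    Real.expMonoidHom.comp (AddMonoidHom.toMultiplicative f)
  have character_injective : Function.Injective character := fun f g hfg ↦
    DFunLike.ext _ _ fun s ↦ Real.exp_injective (DFunLike.congr_fun hfg (Multiplicative.ofAdd s))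
  exact (linearIndependent_monoidHom (Multiplicative M) ℝ).comp character character_injective

lemma eq_zero_of_sum_mul_exp_eq_zero {M α : Type*} [AddZeroClass M] {T : Finset α}
    {f : α → M →+ ℝ} (hf : Set.InjOn f T) {w : α → ℝ}
    (hw : ∀ s, ∑ x ∈ T, w x * Real.exp (f x s) = 0) : ∀ x ∈ T, w x = 0 := by
  have exp_linearIndepOn : LinearIndepOn ℝ (fun x s ↦ Real.exp (f x s)) (T : Set α) :=
    (linearIndependent_exp_addMonoidHom M).comp _ hf.injective
  refine linearIndepOn_finset_iff.1 exp_linearIndepOn w ?_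
  ext s
  simpa using hw s

lemma eq_zero_of_sum_mul_exp_dotProduct_eq_zero {ι α : Type*} [Fintype ι] {T : Finset α}
    {v : α → ι → ℝ} {A s₀ : ι → ℝ} {w : α → ℝ}
    (hv : ∀ x ∈ T, ∀ y ∈ T, x ≠ y → ∃ s, A ⬝ᵥ s = 0 ∧ v x ⬝ᵥ s ≠ v y ⬝ᵥ s)
    (hw : ∀ s, A ⬝ᵥ s = A ⬝ᵥ s₀ → ∑ x ∈ T, w x * Real.exp (v x ⬝ᵥ s) = 0) :
    ∀ x ∈ T, w x = 0 := by
  let W := LinearMap.ker (dotProductBilin ℝ ℝ A)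
  let restricted (x : α) : W →+ ℝ := (dotProductBilin ℝ ℝ (v x) ∘ₗ W.subtype).toAddMonoidHom
  have restricted_injOn : Set.InjOn restricted T := fun x hx y hy hxy ↦ by
    by_contra hne
    obtain ⟨s, hs, hs_ne⟩ := hv x hx y hy hne
    exact hs_ne (DFunLike.congr_fun hxy ⟨s, hs⟩)
  have sum_eq_zero (s : W) :
      ∑ x ∈ T, w x * Real.exp (v x ⬝ᵥ s₀) * Real.exp (restricted x s) = 0 := by
    change ∑ x ∈ T, w x * Real.exp (v x ⬝ᵥ s₀) * Real.exp (v x ⬝ᵥ s) = 0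
    have hs : A ⬝ᵥ (s₀ + s) = A ⬝ᵥ s₀ := by
      rw [dotProduct_add, show A ⬝ᵥ s = 0 from s.2, add_zero]
    simpa only [dotProduct_add, Real.exp_add, ← mul_assoc] using hw _ hs
  exact fun x hx ↦ (mul_eq_zero_iff_right (Real.exp_ne_zero _)).1
    (eq_zero_of_sum_mul_exp_eq_zero restricted_injOn sum_eq_zero x hx)

lemma exists_eq_smul_of_forall_dotProduct_eq_zero {ι K : Type*} [Fintype ι] [Field K]
    [LinearOrder K] [IsStrictOrderedRing K] {A B : ι → K} (h : ∀ s, A ⬝ᵥ s = 0 → B ⬝ᵥ s = 0) :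
    ∃ r : K, B = r • A := by
  set r := A ⬝ᵥ B / A ⬝ᵥ A with hr
  refine ⟨r, sub_eq_zero.1 (dotProduct_self_eq_zero.1 ?_)⟩
  have residual_orthogonal : A ⬝ᵥ (B - r • A) = 0 := by
    rcases eq_or_ne A 0 with rfl | hA
    · simp
    · have : A ⬝ᵥ A ≠ 0 := dotProduct_self_eq_zero.not.2 hA
      rw [dotProduct_sub, dotProduct_smul, smul_eq_mul, hr, div_mul_cancel₀ _ this, sub_self]
  rw [sub_dotProduct, h _ residual_orthogonal, smul_dotProduct, residual_orthogonal, smul_zero,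
    sub_zero]

lemma exists_dotProduct_eq {ι K : Type*} [Fintype ι] [Field K] [LinearOrder K]
    [IsStrictOrderedRing K] {A : ι → K} (hA : A ≠ 0) (b : K) : ∃ s, A ⬝ᵥ s = b :=
  ⟨(b / A ⬝ᵥ A) • A, by
    rw [dotProduct_smul, smul_eq_mul, div_mul_cancel₀ _ (dotProduct_self_eq_zero.not.2 hA)]⟩

end LinearAlgebra

section PowerFunction

lemma multinomial_cast_ne_zero {ι : Type*} [Fintype ι] (x : ι → ℕ) :
    (Nat.multinomial univ x : ℝ) ≠ 0 :=
  Nat.cast_ne_zero.2 (Nat.multinomial_pos univ x).ne'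

variable {ι : Type} [Fintype ι] [DecidableEq ι] {n : ℕ}

lemma countVecs_eq_piAntidiag (n : ℕ) : countVecs ι n = piAntidiag univ n := by
  ext x
  simp only [countVecs, mem_filter, Fintype.mem_piFinset, mem_range, mem_piAntidiag, mem_univ,
    implies_true, and_true, and_iff_right_iff_imp]
  rintro rfl i
  exact Nat.lt_succ_of_le (single_le_sum (fun _ _ ↦ Nat.zero_le _) (mem_univ i))

lemma mem_countVecs {x : ι → ℕ} : x ∈ countVecs ι n ↔ ∑ i, x i = n := by
  simp [countVecs_eq_piAntidiag]

lemma powerFn_const (n : ℕ) (c : ℝ) (π : ι → ℝ) :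
    powerFn ι n (fun _ ↦ c) π = c * (∑ i, π i) ^ n := by
  simp only [powerFn, sum_pow_eq_sum_piAntidiag, countVecs_eq_piAntidiag, mul_sum, mul_assoc]

lemma powerFn_const_of_mem {π : ι → ℝ} (hπ : π ∈ probSimplex ι) (n : ℕ) (c : ℝ) :
    powerFn ι n (fun _ ↦ c) π = c := by
  rw [powerFn_const, hπ.2, one_pow, mul_one]

lemma powerFn_add (n : ℕ) (φ ψ : (ι → ℕ) → ℝ) (π : ι → ℝ) :
    powerFn ι n (fun x ↦ φ x + ψ x) π = powerFn ι n φ π + powerFn ι n ψ π := by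
  simp only [powerFn, add_mul, sum_add_distrib]

lemma powerFn_const_mul (n : ℕ) (r : ℝ) (ψ : (ι → ℕ) → ℝ) (π : ι → ℝ) :
    powerFn ι n (fun x ↦ r * ψ x) π = r * powerFn ι n ψ π := by
  simp only [powerFn, mul_sum, mul_assoc]

lemma powerFn_congr {φ ψ : (ι → ℕ) → ℝ} (h : ∀ x ∈ countVecs ι n, φ x = ψ x) (π : ι → ℝ) :
    powerFn ι n φ π = powerFn ι n ψ π :=
  sum_congr rfl fun x hx ↦ by rw [h x hx]

lemma powerFn_smul_apply (n : ℕ) (φ : (ι → ℕ) → ℝ) (r : ℝ) (π : ι → ℝ) :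
    powerFn ι n φ (r • π) = r ^ n * powerFn ι n φ π := by
  simp only [powerFn, mul_sum]
  refine sum_congr rfl fun x hx ↦ ?_
  simp only [Pi.smul_apply, smul_eq_mul, mul_pow, prod_mul_distrib, prod_pow_eq_pow_sum,
    mem_countVecs.1 hx]
  ring

lemma continuous_powerFn (n : ℕ) (φ : (ι → ℕ) → ℝ) : Continuous (powerFn ι n φ) := by
  unfold powerFn
  fun_prop

lemma exists_powerFn_eq_eval {p : MvPolynomial ι ℝ} (hp : p.IsHomogeneous n) :
    ∃ ψ : (ι → ℕ) → ℝ, ∀ π, powerFn ι n ψ π = MvPolynomial.eval π p := by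
  refine ⟨fun x ↦ p.coeff (Finsupp.equivFunOnFinite.symm x) / Nat.multinomial univ x, fun π ↦ ?_⟩
  rw [MvPolynomial.eval_eq', powerFn]
  symm
  refine sum_of_injOn (fun d ↦ ⇑d) DFunLike.coe_injective.injOn (fun d hd ↦ ?_) (fun x _ hx ↦ ?_)
    fun d _ ↦ ?_
  · rw [mem_coe, mem_countVecs, ← Finsupp.degree_eq_sum]
    exact (hp.degree_eq_sum_deg_support hd).symm
  · have : p.coeff (Finsupp.equivFunOnFinite.symm x) = 0 := by
      by_contra hne
      exact hx ⟨_, MvPolynomial.mem_support_iff.2 hne, rfl⟩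
    rw [this, zero_div, zero_mul, zero_mul]
  · rw [div_mul_cancel₀ _ (multinomial_cast_ne_zero _), Finsupp.equivFunOnFinite_symm_coe]

lemma exists_isTest_powerFn_eq (n : ℕ) (ψ : (ι → ℕ) → ℝ) :
    ∃ ε > 0, ∃ φ, IsTest ι n φ ∧
      ∀ π ∈ probSimplex ι, powerFn ι n φ π = 1 / 2 + ε * powerFn ι n ψ π := by
  set total := 1 + ∑ x ∈ countVecs ι n, |ψ x|
  have abs_le_total : ∀ x ∈ countVecs ι n, |ψ x| ≤ total := fun x hx ↦
    (single_le_sum (fun y _ ↦ abs_nonneg (ψ y)) hx).trans (le_add_of_nonneg_left zero_le_one)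
  refine ⟨1 / (2 * total), by positivity, fun x ↦ 1 / 2 + 1 / (2 * total) * ψ x,
    fun x hx ↦ ?_, fun π hπ ↦ ?_⟩
  · have : |1 / (2 * total) * ψ x| ≤ 1 / 2 := by
      rw [abs_mul, abs_of_pos (by positivity), one_div_mul_eq_div, div_le_div_iff₀ (by positivity)
        two_pos]
      linarith [abs_le_total x hx]
    constructor <;> linarith [abs_le.1 this]
  · rw [powerFn_add, powerFn_const_of_mem hπ, powerFn_const_mul]

end PowerFunction

section UnbiasedTests

variable {ι : Type} [Fintype ι] [DecidableEq ι] {n : ℕ} {P0 : Set (ι → ℝ)} {φ : (ι → ℕ) → ℝ}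

lemma IsNTUB.one_le_sampleSize (h : IsNTUB ι n P0 φ) : 1 ≤ n := by
  obtain ⟨-, π, -, π', -, hne⟩ := h
  refine Nat.one_le_iff_ne_zero.2 fun hn ↦ hne (sum_congr rfl fun x hx ↦ ?_)
  have : ∀ i, x i = 0 := by simpa [hn] using mem_countVecs.1 hx
  simp only [this, pow_zero]

lemma Unbiased.powerFn_eq (h : Unbiased ι n P0 φ)
    (hcl : P0 ⊆ closure (probSimplex ι \ P0)) {π π' : ι → ℝ} (hπ : π ∈ P0) (hπ' : π' ∈ P0) :
    powerFn ι n φ π = powerFn ι n φ π' := by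
  have powerFn_le : ∀ π₁ ∈ P0, ∀ π₂ ∈ P0, powerFn ι n φ π₁ ≤ powerFn ι n φ π₂ :=
    fun π₁ h₁ π₂ h₂ ↦ closure_minimal (h π₁ h₁)
      (isClosed_Ici.preimage (continuous_powerFn n φ)) (hcl h₂)
  exact (powerFn_le π hπ π' hπ').antisymm (powerFn_le π' hπ' π hπ)

lemma exists_isNTUB_of_isHomogeneous {d : ℕ} {p : MvPolynomial ι ℝ} (hp : p.IsHomogeneous d)
    {π₀ π₁ : ι → ℝ} (hP0 : P0 ⊆ probSimplex ι) (hπ₀ : π₀ ∈ P0) (hπ₁ : π₁ ∈ probSimplex ι)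
    (hzero : ∀ π ∈ P0, MvPolynomial.eval π p = 0) (hne : MvPolynomial.eval π₁ p ≠ 0) :
    ∃ φ, IsTest ι (d * 2) φ ∧ IsNTUB ι (d * 2) P0 φ := by
  obtain ⟨ψ, hψ⟩ := exists_powerFn_eq_eval (hp.pow 2)
  obtain ⟨ε, hε, φ, hφ, hpow⟩ := exists_isTest_powerFn_eq (d * 2) ψ
  simp only [hψ, map_pow] at hpow
  have power_null : ∀ π ∈ P0, powerFn ι (d * 2) φ π = 1 / 2 := fun π hπ ↦ by
    rw [hpow π (hP0 hπ), hzero π hπ]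
    ring
  refine ⟨φ, hφ, fun π hπ πA hπA ↦ ?_, π₀, hP0 hπ₀, π₁, hπ₁, ?_⟩
  · rw [power_null π hπ, hpow πA hπA.1]
    exact le_add_of_nonneg_right (by positivity)
  · rw [power_null π₀ hπ₀, hpow π₁ hπ₁]
    exact (lt_add_of_pos_right _ (by positivity)).ne

end UnbiasedTests

section Softmax

variable {ι : Type*} [Fintype ι]

/-- The softmax parametrization of the interior of the probability simplex. It is constant along the
all-ones direction. -/
noncomputable def softmax (s : ι → ℝ) : ι → ℝ :=
  (∑ j, Real.exp (s j))⁻¹ • fun i ↦ Real.exp (s i)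

lemma sum_exp_pos [Nonempty ι] (s : ι → ℝ) : 0 < ∑ j, Real.exp (s j) :=
  sum_pos (fun j _ ↦ Real.exp_pos (s j)) univ_nonempty

lemma softmax_pos (s : ι → ℝ) (i : ι) : 0 < softmax s i :=
  have : Nonempty ι := ⟨i⟩
  mul_pos (inv_pos.2 (sum_exp_pos s)) (Real.exp_pos (s i))

lemma log_softmax (s : ι → ℝ) (i : ι) :
    Real.log (softmax s i) = s i - Real.log (∑ j, Real.exp (s j)) := by
  have : Nonempty ι := ⟨i⟩
  rw [softmax, Pi.smul_apply, smul_eq_mul,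
    Real.log_mul (inv_ne_zero (sum_exp_pos s).ne') (Real.exp_ne_zero _), Real.log_inv, Real.log_exp,
    neg_add_eq_sub]

lemma continuous_softmax [Nonempty ι] : Continuous (softmax : (ι → ℝ) → ι → ℝ) := by
  have sum_exp_ne_zero (s : ι → ℝ) : ∑ j, Real.exp (s j) ≠ 0 := (sum_exp_pos s).ne'
  unfold softmax
  fun_prop (disch := assumption)

end Softmax

section BinomialEquations

variable {ι : Type*} [Fintype ι]

lemma prod_exp_pow (s : ι → ℝ) (x : ι → ℕ) :
    ∏ i, Real.exp (s i) ^ x i = Real.exp ((fun i ↦ (x i : ℝ)) ⬝ᵥ s) := by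
  simp only [dotProduct, Real.exp_sum, Real.exp_nat_mul]

lemma prod_pow_eq_exp_mul_prod_pow_iff {π : ι → ℝ} (hπ : ∀ i, 0 < π i) (u v : ι → ℕ) (b : ℝ) :
    ∏ i, π i ^ u i = Real.exp b * ∏ i, π i ^ v i ↔
      ((fun i ↦ (u i : ℝ) - v i) ⬝ᵥ fun i ↦ Real.log (π i)) = b := by
  have prod_pow_eq_exp (x : ι → ℕ) :
      ∏ i, π i ^ x i = Real.exp ((fun i ↦ (x i : ℝ)) ⬝ᵥ fun i ↦ Real.log (π i)) := by
    simp only [← prod_exp_pow, Real.exp_log (hπ _)]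
  rw [prod_pow_eq_exp, prod_pow_eq_exp, ← Real.exp_add, Real.exp_eq_exp, ← sub_eq_iff_eq_add,
    ← sub_dotProduct]
  rfl

lemma exists_isHomogeneous_eval_eq_zero_iff {c : ι → ℤ} (hc : ∑ i, c i = 0) (b : ℝ) :
    ∃ (d : ℕ) (p : MvPolynomial ι ℝ), p.IsHomogeneous d ∧
      ∀ π : ι → ℝ, (∀ i, 0 < π i) →
        (MvPolynomial.eval π p = 0 ↔ ((fun i ↦ (c i : ℝ)) ⬝ᵥ fun i ↦ Real.log (π i)) = b) := by
  set u : ι → ℕ := fun i ↦ (c i).toNat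
  set v : ι → ℕ := fun i ↦ (-c i).toNat
  have u_sub_v (i : ι) : (u i : ℤ) - v i = c i := Int.toNat_sub_toNat_neg (c i)
  have degree_eq : ∑ i, v i = ∑ i, u i := by
    have : ∑ i, ((u i : ℤ) - v i) = 0 := by simp only [u_sub_v, hc]
    rw [sum_sub_distrib, sub_eq_zero] at this
    exact_mod_cast this.symm
  have monomial_isHomogeneous (x : ι → ℕ) :
      (∏ i, (MvPolynomial.X i : MvPolynomial ι ℝ) ^ x i).IsHomogeneous (∑ i, x i) :=
    .prod _ _ _ fun i _ ↦ MvPolynomial.isHomogeneous_X_pow i (x i)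
  refine ⟨∑ i, u i, ∏ i, MvPolynomial.X i ^ u i -
    MvPolynomial.C (Real.exp b) * ∏ i, MvPolynomial.X i ^ v i,
    (monomial_isHomogeneous u).sub (degree_eq ▸ (monomial_isHomogeneous v).C_mul _), fun π hπ ↦ ?_⟩
  have c_cast (i : ι) : (c i : ℝ) = u i - v i := by exact_mod_cast (u_sub_v i).symm
  simp only [c_cast, ← prod_pow_eq_exp_mul_prod_pow_iff hπ]
  simp [sub_eq_zero]

end BinomialEquations

section SoftmaxOnSimplex

variable {ι : Type} [Fintype ι]

lemma softmax_mem_probSimplex [Nonempty ι] (s : ι → ℝ) : softmax s ∈ probSimplex ι := by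
  refine ⟨fun i ↦ (softmax_pos s i).le, ?_⟩
  simp only [softmax, Pi.smul_apply, smul_eq_mul, ← mul_sum]
  exact inv_mul_cancel₀ (sum_exp_pos s).ne'

lemma softmax_log {π : ι → ℝ} (hπ : π ∈ probSimplex ι) (hpos : ∀ i, 0 < π i) :
    softmax (fun i ↦ Real.log (π i)) = π := by
  simp only [softmax, Real.exp_log (hpos _), hπ.2, inv_one, one_smul]

lemma powerFn_softmax_eq_zero_iff [DecidableEq ι] [Nonempty ι] {n : ℕ} {ψ : (ι → ℕ) → ℝ}
    {s : ι → ℝ} :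
    powerFn ι n ψ (softmax s) = 0 ↔
      ∑ x ∈ countVecs ι n,
        ψ x * Nat.multinomial univ x * Real.exp ((fun i ↦ (x i : ℝ)) ⬝ᵥ s) = 0 := by
  rw [softmax, powerFn_smul_apply,
    mul_eq_zero_iff_left (pow_ne_zero n (inv_ne_zero (sum_exp_pos s).ne'))]
  simp only [powerFn, prod_exp_pow]

end SoftmaxOnSimplex

section LogLinearNull

variable {ι : Type} [Fintype ι] {A : ι → ℝ} {b : ℝ}

/-- The log-linear null hypothesis with coefficients `A` and right-hand side `b`. For a contrast `A`
(`∑ i, A i = 0`) it does not refer to a baseline cell; see `setOf_logRatio_eq_logLinearNull` for the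
log-ratio form. -/
def logLinearNull (A : ι → ℝ) (b : ℝ) : Set (ι → ℝ) :=
  {π ∈ probSimplex ι | (∀ i, 0 < π i) ∧ (A ⬝ᵥ fun i ↦ Real.log (π i)) = b}

lemma logLinearNull_subset_probSimplex : logLinearNull A b ⊆ probSimplex ι := fun _ hπ ↦ hπ.1

lemma logLinearNull_smul {r : ℝ} (hr : r ≠ 0) (A : ι → ℝ) (b : ℝ) :
    logLinearNull (r • A) (r * b) = logLinearNull A b := by
  simp only [logLinearNull, smul_dotProduct, smul_eq_mul, mul_right_inj' hr]

lemma softmax_mem_logLinearNull_iff [Nonempty ι] (hA : ∑ i, A i = 0) {s : ι → ℝ} :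
    softmax s ∈ logLinearNull A b ↔ A ⬝ᵥ s = b := by
  have dotProduct_log_softmax : (A ⬝ᵥ fun i ↦ Real.log (softmax s i)) = A ⬝ᵥ s := by
    simp only [dotProduct, log_softmax, mul_sub, sum_sub_distrib, ← sum_mul, hA, zero_mul, sub_zero]
  simp only [logLinearNull, Set.mem_ofPred_eq, softmax_mem_probSimplex, softmax_pos, implies_true,
    true_and, dotProduct_log_softmax]

lemma logLinearNull_subset_closure_compl (hA : ∑ i, A i = 0) (hA0 : A ≠ 0) (b : ℝ) :
    logLinearNull A b ⊆ closure (probSimplex ι \ logLinearNull A b) := by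
  rintro π ⟨hπ, hpos, hb⟩
  have : Nonempty ι := (Function.ne_iff.1 hA0).nonempty
  set s : ι → ℝ := fun i ↦ Real.log (π i)
  have path_continuous : Continuous fun ε : ℝ ↦ softmax (s + ε • A) :=
    continuous_softmax.comp (by fun_prop)
  have path_tendsto :
      Filter.Tendsto (fun ε : ℝ ↦ softmax (s + ε • A)) (nhdsWithin 0 {0}ᶜ) (nhds π) := by
    simpa [s, softmax_log hπ hpos] using
      (path_continuous.tendsto 0).mono_left (nhdsWithin_le_nhds (s := {0}ᶜ))
  refine mem_closure_of_tendsto path_tendsto ?_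
  filter_upwards [self_mem_nhdsWithin] with ε hε
  refine ⟨softmax_mem_probSimplex _, fun hmem ↦ ?_⟩
  rw [softmax_mem_logLinearNull_iff hA, dotProduct_add, hb, dotProduct_smul, add_eq_left,
    smul_eq_zero, dotProduct_self_eq_zero] at hmem
  exact hmem.elim hε hA0

lemma exists_int_logLinearNull_eq {A : ι → ℚ} (hA : ∑ i, A i = 0) (b : ℝ) :
    ∃ (c : ι → ℤ) (b' : ℝ), ∑ i, c i = 0 ∧
      logLinearNull (fun i ↦ (A i : ℝ)) b = logLinearNull (fun i ↦ (c i : ℝ)) b' := by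
  obtain ⟨N, hN⟩ := IsLocalization.exist_integer_multiples_of_finite (nonZeroDivisors ℤ) A
  choose c hc using hN
  have hc : ∀ i, (c i : ℚ) = N * A i := by simpa [zsmul_eq_mul] using hc
  have N_ne_zero : (N : ℝ) ≠ 0 := Int.cast_ne_zero.2 (nonZeroDivisors.coe_ne_zero N)
  refine ⟨c, N * b, ?_, ?_⟩
  · have : ((∑ i, c i : ℤ) : ℚ) = 0 := by
      rw [Int.cast_sum, sum_congr rfl fun i _ ↦ hc i, ← mul_sum, hA, mul_zero]
    exact_mod_cast this
  · have : (fun i ↦ (c i : ℝ)) = (N : ℝ) • fun i ↦ (A i : ℝ) := funext fun i ↦ by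
      simpa using congrArg (Rat.cast : ℚ → ℝ) (hc i)
    rw [this, logLinearNull_smul N_ne_zero]

variable [DecidableEq ι]

lemma exists_ne_dotProduct_eq_of_isNTUB {n : ℕ} {φ : (ι → ℕ) → ℝ} (hA : ∑ i, A i = 0) (hA0 : A ≠ 0)
    (hφ : IsNTUB ι n (logLinearNull A b) φ) :
    ∃ x ∈ countVecs ι n, ∃ y ∈ countVecs ι n, x ≠ y ∧
      ∀ s, A ⬝ᵥ s = 0 → (fun i ↦ (x i : ℝ)) ⬝ᵥ s = (fun i ↦ (y i : ℝ)) ⬝ᵥ s := by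
  by_contra! hdistinct
  obtain ⟨hunbiased, π, hπ, π', hπ', hne⟩ := hφ
  have : Nonempty ι := (Function.ne_iff.1 hA0).nonempty
  obtain ⟨s₀, hs₀⟩ := exists_dotProduct_eq hA0 b
  set c := powerFn ι n φ (softmax s₀)
  have power_eq_on_null (s : ι → ℝ) (hs : A ⬝ᵥ s = b) : powerFn ι n φ (softmax s) = c :=
    hunbiased.powerFn_eq (logLinearNull_subset_closure_compl hA hA0 b)
      ((softmax_mem_logLinearNull_iff hA).2 hs) ((softmax_mem_logLinearNull_iff hA).2 hs₀)
  have sum_exp_eq_zero (s : ι → ℝ) (hs : A ⬝ᵥ s = b) : ∑ x ∈ countVecs ι n,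
      (φ x + -c) * Nat.multinomial univ x * Real.exp ((fun i ↦ (x i : ℝ)) ⬝ᵥ s) = 0 := by
    rw [← powerFn_softmax_eq_zero_iff, powerFn_add, power_eq_on_null s hs,
      powerFn_const_of_mem (softmax_mem_probSimplex s), add_neg_cancel]
  have coeff_eq_zero := eq_zero_of_sum_mul_exp_dotProduct_eq_zero hdistinct fun s hs ↦
    sum_exp_eq_zero s (hs.trans hs₀)
  have test_eq_const : ∀ x ∈ countVecs ι n, φ x = c := fun x hx ↦ add_neg_eq_zero.1
    ((mul_eq_zero_iff_right (multinomial_cast_ne_zero x)).1 (coeff_eq_zero x hx))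
  refine hne ?_
  rw [powerFn_congr test_eq_const, powerFn_congr test_eq_const, powerFn_const_of_mem hπ,
    powerFn_const_of_mem hπ']

lemma exists_rat_of_isNTUB {n : ℕ} {φ : (ι → ℕ) → ℝ} (hA : ∑ i, A i = 0) (hA0 : A ≠ 0)
    (hφ : IsNTUB ι n (logLinearNull A b) φ) :
    ∃ (A' : ι → ℚ) (b' : ℝ), ∑ i, A' i = 0 ∧
      logLinearNull A b = logLinearNull (fun i ↦ (A' i : ℝ)) b' := by
  obtain ⟨x, hx, y, hy, hxy, hdot⟩ := exists_ne_dotProduct_eq_of_isNTUB hA hA0 hφ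
  rw [mem_countVecs] at hx hy
  obtain ⟨r, hr⟩ : ∃ r : ℝ, (fun i ↦ (x i : ℝ)) - (fun i ↦ (y i : ℝ)) = r • A :=
    exists_eq_smul_of_forall_dotProduct_eq_zero fun s hs ↦ by
      rw [sub_dotProduct, hdot s hs, sub_self]
  have r_ne_zero : r ≠ 0 := by
    rintro rfl
    rw [zero_smul, sub_eq_zero] at hr
    exact hxy (funext fun i ↦ Nat.cast_injective (congrFun hr i))
  refine ⟨fun i ↦ x i - y i, r * b, ?_, ?_⟩
  · rw [sum_sub_distrib, ← Nat.cast_sum, ← Nat.cast_sum, hx, hy, sub_self]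
  · rw [← logLinearNull_smul r_ne_zero, ← hr]
    simp only [Rat.cast_sub, Rat.cast_natCast, Pi.sub_def]

lemma exists_isNTUB_of_rat (hA : ∑ i, A i = 0) (hA0 : A ≠ 0) {A' : ι → ℚ} {b' : ℝ}
    (hA' : ∑ i, A' i = 0) (h : logLinearNull A b = logLinearNull (fun i ↦ (A' i : ℝ)) b') :
    ∃ n φ, IsTest ι n φ ∧ IsNTUB ι n (logLinearNull A b) φ := by
  have : Nonempty ι := (Function.ne_iff.1 hA0).nonempty
  obtain ⟨s₀, hs₀⟩ := exists_dotProduct_eq hA0 b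
  obtain ⟨s₁, hs₁⟩ := exists_dotProduct_eq hA0 (b + 1)
  have mem_null : softmax s₀ ∈ logLinearNull A b := (softmax_mem_logLinearNull_iff hA).2 hs₀
  have notMem_null : softmax s₁ ∉ logLinearNull A b := by
    simp [softmax_mem_logLinearNull_iff hA, hs₁]
  obtain ⟨c, B, hc, hnull⟩ := exists_int_logLinearNull_eq hA' b'
  obtain ⟨d, p, hp, eval_eq_zero_iff⟩ := exists_isHomogeneous_eval_eq_zero_iff hc B
  rw [h, hnull] at mem_null notMem_null ⊢
  refine ⟨d * 2, exists_isNTUB_of_isHomogeneous hp logLinearNull_subset_probSimplex mem_null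
    (softmax_mem_probSimplex s₁) (fun π hπ ↦ (eval_eq_zero_iff π hπ.2.1).2 hπ.2.2) fun hzero ↦ ?_⟩
  exact notMem_null ⟨softmax_mem_probSimplex s₁, softmax_pos s₁,
    (eval_eq_zero_iff _ (softmax_pos s₁)).1 hzero⟩

theorem stmt_8_general (hA : ∑ i, A i = 0) (hA0 : A ≠ 0) (b : ℝ) :
    (∃ n, 1 ≤ n ∧ ∃ φ, IsTest ι n φ ∧ IsNTUB ι n (logLinearNull A b) φ) ↔
      ∃ (A' : ι → ℚ) (b' : ℝ), ∑ i, A' i = 0 ∧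
        logLinearNull A b = logLinearNull (fun i ↦ (A' i : ℝ)) b' := by
  constructor
  · rintro ⟨n, -, φ, -, hφ⟩
    exact exists_rat_of_isNTUB hA hA0 hφ
  · rintro ⟨A', b', hA', h⟩
    obtain ⟨n, φ, htest, hφ⟩ := exists_isNTUB_of_rat hA hA0 hA' h
    exact ⟨n, hφ.one_le_sampleSize, φ, htest, hφ⟩

end LogLinearNull

section LogRatios

/-- The contrast whose log-linear form is `∑ i, a i * log (π i / π last)`: the baseline cell, which
comes last, receives the coefficient that makes the total zero. -/
def contrastOfLogRatios {R : Type*} [AddCommGroup R] {m : ℕ} (a : Fin m → R) : Fin (m + 1) → R :=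
  Fin.snoc a (-∑ i, a i)

variable {m : ℕ}

lemma sum_contrastOfLogRatios {R : Type*} [AddCommGroup R] (a : Fin m → R) :
    ∑ i, contrastOfLogRatios a i = 0 := by
  rw [contrastOfLogRatios, Fin.sum_snoc, add_neg_cancel]

lemma contrastOfLogRatios_ne_zero {R : Type*} [AddCommGroup R] {a : Fin m → R} (ha : a ≠ 0) :
    contrastOfLogRatios a ≠ 0 := fun h ↦
  ha (funext fun i ↦ by simpa [contrastOfLogRatios] using congrFun h i.castSucc)

lemma contrastOfLogRatios_init {R : Type*} [AddCommGroup R] {A : Fin (m + 1) → R}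
    (hA : ∑ i, A i = 0) : contrastOfLogRatios (Fin.init A) = A := by
  have : -∑ i, Fin.init A i = A (Fin.last m) := by
    rw [Fin.sum_univ_castSucc] at hA
    exact neg_eq_of_add_eq_zero_right hA
  rw [contrastOfLogRatios, this, Fin.snoc_init_self]

lemma contrastOfLogRatios_ratCast (a : Fin m → ℚ) :
    contrastOfLogRatios (fun i ↦ (a i : ℝ)) = fun i ↦ ((contrastOfLogRatios a i : ℚ) : ℝ) := by
  ext i
  refine Fin.lastCases ?_ (fun j ↦ ?_) i <;> simp [contrastOfLogRatios]

lemma setOf_logRatio_eq_logLinearNull (a : Fin m → ℝ) (b : ℝ) :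
    {π ∈ probSimplex (Fin (m + 1)) | (∀ i, 0 < π i) ∧
      ∑ i, a i * Real.log (π i.castSucc / π (Fin.last m)) = b} =
        logLinearNull (contrastOfLogRatios a) b := by
  ext π
  refine and_congr_right fun _ ↦ and_congr_right fun hpos ↦ Eq.congr_left ?_
  have log_ratio (i : Fin m) : Real.log (π i.castSucc / π (Fin.last m)) =
      Real.log (π i.castSucc) - Real.log (π (Fin.last m)) :=
    Real.log_div (hpos _).ne' (hpos _).ne'
  simp only [log_ratio, mul_sub, sum_sub_distrib, ← sum_mul, dotProduct, Fin.sum_univ_castSucc,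
    contrastOfLogRatios, Fin.snoc_castSucc, Fin.snoc_last]
  ring

lemma exists_rat_logLinearNull_iff_exists_rat_logRatio {P0 : Set (Fin (m + 1) → ℝ)} :
    (∃ (A : Fin (m + 1) → ℚ) (b : ℝ), ∑ i, A i = 0 ∧ P0 = logLinearNull (fun i ↦ (A i : ℝ)) b) ↔
      ∃ (a : Fin m → ℚ) (b : ℝ), P0 = {π ∈ probSimplex (Fin (m + 1)) | (∀ i, 0 < π i) ∧
        ∑ i, (a i : ℝ) * Real.log (π i.castSucc / π (Fin.last m)) = b} := by
  simp only [setOf_logRatio_eq_logLinearNull, contrastOfLogRatios_ratCast]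
  constructor
  · rintro ⟨A, b, hA, h⟩
    exact ⟨Fin.init A, b, by rwa [contrastOfLogRatios_init hA]⟩
  · rintro ⟨a, b, h⟩
    exact ⟨contrastOfLogRatios a, b, sum_contrastOfLogRatios a, h⟩

end LogRatios

/-- a log-linear null hypothesis admits an NTUB test (for some sample size)
iff it admits a representation with rational coefficients. -/
theorem stmt_8 (k : ℕ) (hk : 3 ≤ k)
    (a : Fin (k - 1) → ℝ) (ha : a ≠ 0) (b : ℝ)
    (P0 : Set (Fin k → ℝ))
    (hP0 : P0 = {π ∈ probSimplex (Fin k) | (∀ i, 0 < π i) ∧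
      ∑ i : Fin (k - 1),
        a i * Real.log (π (Fin.castLE (Nat.sub_le k 1) i) / π ⟨k - 1, by omega⟩) = b}) :
    (∃ n, 1 ≤ n ∧ ∃ φ, IsTest (Fin k) n φ ∧ IsNTUB (Fin k) n P0 φ) ↔
      ∃ (a' : Fin (k - 1) → ℚ) (b' : ℝ),
        P0 = {π ∈ probSimplex (Fin k) | (∀ i, 0 < π i) ∧
          ∑ i : Fin (k - 1),
            (a' i : ℝ) * Real.log (π (Fin.castLE (Nat.sub_le k 1) i) / π ⟨k - 1, by omega⟩) = b'} := by
  obtain ⟨m, rfl⟩ : ∃ m, k = m + 1 := ⟨k - 1, by omega⟩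
  rw [hP0.trans (setOf_logRatio_eq_logLinearNull (m := m) a b)]
  have hcontrast := sum_contrastOfLogRatios (m := m) a
  exact (stmt_8_general hcontrast (contrastOfLogRatios_ne_zero ha) b).trans
    exists_rat_logLinearNull_iff_exists_rat_logRatio
end

section
/- Assume: P0 is an algebraic null hypothesis (P0 = Δ_{k-1} ∩ {π : g(π)=0 for all g ∈ G} with ∅ ≠ P0 ≠ Δ_{k-1}) with projection P̃0 ⊆ Δ̃_{k-1}; the closure of int(Δ̃_{k-1}) ∩ P̃0 equals P̃0; the vanishing ideal I(P̃0) = {h ∈ MvPolynomial (Fin (k−1)) ℝ : h = 0 on P̃0} is the principal ideal generated by a single polynomial f; and the gradient of f (the vector of partial derivatives pderiv i f) is nonzero when evaluated at every point of P̃0. If φ is an NTUB test of P0 of sample size n whose size is α, then there exists h ∈ MvPolynomial (Fin (k−1)) ℝ of total degree at most n − 2·totalDegree(f), with h(π') ≥ 0 for all π' ∈ Δ̃_{k-1}, such that β_φ(π'_1,…,π'_{k-1}, 1−∑ i π' i) = f(π')²·h(π') + α for every π' ∈ ℝ^{k-1}; and if moreover φ is SUB, then this h satisfies h(π') > 0 for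 all π' ∈ Δ̃_{k-1} \ P̃0. -/
open Finset

/-- The projected simplex in `ℝ^(k-1)`. -/
def projSimplex (k : ℕ) : Set (Fin (k - 1) → ℝ) :=
  {π' | (∀ i, 0 ≤ π' i) ∧ ∑ i, π' i ≤ 1}

/-- Identify `π' ∈ Δ̃_{k-1}` with `(π'_1, …, π'_{k-1}, 1 - ∑ i, π' i) ∈ Δ_{k-1}`. -/
def liftProj (k : ℕ) (π' : Fin (k - 1) → ℝ) : Fin k → ℝ :=
  fun i => if h : (i : ℕ) < k - 1 then π' ⟨(i : ℕ), h⟩ else 1 - ∑ j, π' j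

/-- Projection of a point of `Δ_{k-1}` onto its first `k-1` coordinates. -/
def projPoint (k : ℕ) (π : Fin k → ℝ) : Fin (k - 1) → ℝ :=
  fun j => π (Fin.castLE (Nat.sub_le k 1) j)

/-!
The complement of the zero set of `f ≠ 0` is dense in the projected simplex, so by continuity an
unbiased test has minimal power at every point of the null hypothesis; its power there is therefore
constant, equal to the size `α`. Hence `p = β_φ - α` is nonnegative and vanishes on the null set,
which gives `p = f q`. At an interior point of the null set `p` has a local minimum, so
`0 = ∂ᵢ p = q ∂ᵢ f`, and `q` vanishes wherever some `∂ᵢ f` does not. Such points being dense in the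
null set, `q = f h`. The sign of `h` is that of `p` off the zero set of `f`, and density extends
`h ≥ 0` to the whole simplex.
-/

section Polynomial

open MvPolynomial

variable {𝕜 σ : Type*} [NontriviallyNormedField 𝕜]

theorem hasDerivAt_eval_update [DecidableEq σ] (p : MvPolynomial σ 𝕜) (x : σ → 𝕜) (i : σ) :
    HasDerivAt (fun t => eval (Function.update x i t) p) (eval x (pderiv i p)) (x i) := by
  induction p using MvPolynomial.induction_on with
  | C a => simpa using hasDerivAt_const (x i) a
  | add p q hp hq => simpa using hp.fun_add hq
  | mul_X p j hp =>
    have hX : HasDerivAt (fun t => Function.update x i t j) (eval x (pderiv i (X j))) (x i) := by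
      rcases eq_or_ne j i with rfl | hji
      · simpa using hasDerivAt_id' (x j)
      · simpa [hji, pderiv_X_of_ne hji] using hasDerivAt_const (x i) (x j)
    simpa [pderiv_mul, add_comm, mul_comm] using hp.fun_mul hX

theorem dense_setOf_eval_ne_zero {f : MvPolynomial σ 𝕜} (hf : f ≠ 0) :
    Dense {x | eval x f ≠ 0} := by
  refine dense_iff_inter_open.2 fun U hU ⟨x, hx⟩ => ?_
  obtain ⟨I, -, t, ht, htU⟩ := Filter.mem_pi.1 (nhds_pi (a := x) ▸ hU.mem_nhds hx)
  contrapose! hf with hzero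
  refine funext_set t (fun i => infinite_of_mem_nhds (x i) (ht i)) fun y hy => ?_
  by_contra hfy
  have hyU : y ∈ U := htU (Set.pi_mono' (fun _ _ => subset_rfl) (Set.subset_univ I) hy)
  exact Set.eq_empty_iff_forall_notMem.1 hzero y ⟨hyU, by simpa using hfy⟩

theorem subset_closure_setOf_eval_ne_zero {f : MvPolynomial σ 𝕜} (hf : f ≠ 0)
    {S : Set (σ → 𝕜)} (hS : S ⊆ closure (interior S)) :
    S ⊆ closure {x ∈ S | eval x f ≠ 0} := by
  refine hS.trans (closure_minimal ?_ isClosed_closure)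
  exact ((dense_setOf_eval_ne_zero hf).open_subset_closure_inter isOpen_interior).trans
    (closure_mono (Set.inter_subset_inter_left _ interior_subset))

theorem le_eval_of_forall_eval_ne_zero {f p : MvPolynomial σ ℝ} (hf : f ≠ 0)
    {S : Set (σ → ℝ)} (hS : S ⊆ closure (interior S)) {c : ℝ}
    (hp : ∀ x ∈ S, eval x f ≠ 0 → c ≤ eval x p) {x : σ → ℝ} (hx : x ∈ S) : c ≤ eval x p :=
  closure_minimal (fun y hy => hp y hy.1 hy.2)
    (isClosed_le continuous_const (continuous_eval p))
    (subset_closure_setOf_eval_ne_zero hf hS hx)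

theorem eval_nonneg_of_sq_mul_nonneg {f h : MvPolynomial σ ℝ} (hf : f ≠ 0)
    {S : Set (σ → ℝ)} (hS : S ⊆ closure (interior S))
    (hnonneg : ∀ x ∈ S, 0 ≤ eval x (f ^ 2 * h)) {x : σ → ℝ} (hx : x ∈ S) : 0 ≤ eval x h := by
  refine le_eval_of_forall_eval_ne_zero hf hS (fun y hy hfy => ?_) hx
  have hfh := hnonneg y hy
  rw [map_mul, map_pow] at hfh
  exact nonneg_of_mul_nonneg_right hfh (by positivity)

theorem eval_pderiv_eq_zero_of_isLocalMin {p : MvPolynomial σ ℝ} {x : σ → ℝ}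
    (hmin : IsLocalMin (fun y => eval y p) x) (i : σ) : eval x (pderiv i p) = 0 := by
  classical
  have hcont : ContinuousAt (fun t => Function.update x i t) (x i) :=
    continuousAt_const.update i continuousAt_id
  rw [← Function.update_eq_self i x] at hmin
  exact (hmin.comp_continuous hcont).hasDerivAt_eq_zero (hasDerivAt_eval_update p x i)

theorem eval_right_eq_zero_of_isLocalMin_mul {f q : MvPolynomial σ ℝ} {x : σ → ℝ}
    (hmin : IsLocalMin (fun y => eval y (f * q)) x) (hfx : eval x f = 0) {i : σ}
    (hi : eval x (pderiv i f) ≠ 0) : eval x q = 0 := by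
  have hderiv := eval_pderiv_eq_zero_of_isLocalMin hmin i
  rw [pderiv_mul, map_add, map_mul, map_mul, hfx, zero_mul, add_zero] at hderiv
  exact (mul_eq_zero.1 hderiv).resolve_left hi

theorem sq_dvd_of_vanishingIdeal_eq_span {S T : Set (σ → ℝ)} {f p : MvPolynomial σ ℝ}
    (hideal : vanishingIdeal ℝ T = Ideal.span {f})
    (hregular : T ⊆ closure {x ∈ interior S ∩ T | ∃ i, eval x (pderiv i f) ≠ 0})
    (hzero : ∀ x ∈ T, eval x p = 0) (hnonneg : ∀ x ∈ S, 0 ≤ eval x p) : f ^ 2 ∣ p := by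
  have dvd_of_vanishing : ∀ q : MvPolynomial σ ℝ, (∀ x ∈ T, eval x q = 0) → f ∣ q :=
    fun q hq => Ideal.mem_span_singleton.1 (hideal ▸ hq)
  have hf : ∀ x ∈ T, eval x f = 0 :=
    (hideal ▸ Ideal.mem_span_singleton_self f : f ∈ vanishingIdeal ℝ T)
  obtain ⟨q, rfl⟩ := dvd_of_vanishing p hzero
  have hq : T ⊆ {x | eval x q = 0} := by
    refine hregular.trans
      (closure_minimal ?_ (isClosed_eq (continuous_eval q) continuous_const))
    rintro x ⟨⟨hxS, hxT⟩, i, hi⟩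
    refine eval_right_eq_zero_of_isLocalMin_mul ?_ (hf x hxT) hi
    filter_upwards [mem_interior_iff_mem_nhds.1 hxS] with y hy
    exact (hzero x hxT).trans_le (hnonneg y hy)
  rw [pow_two]
  exact mul_dvd_mul_left f (dvd_of_vanishing q hq)

theorem ne_zero_of_subset_closure_regular {T U : Set (σ → ℝ)} {f : MvPolynomial σ ℝ}
    (hT : T.Nonempty) (hregular : T ⊆ closure {x ∈ U | ∃ i, eval x (pderiv i f) ≠ 0}) :
    f ≠ 0 := by
  rintro rfl
  obtain ⟨x, -, i, hi⟩ := closure_nonempty_iff.1 (hT.mono hregular)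
  simp at hi

theorem exists_eq_sq_mul_nonneg {S T : Set (σ → ℝ)} {f p : MvPolynomial σ ℝ} (hf : f ≠ 0)
    (hS : S ⊆ closure (interior S)) (hideal : vanishingIdeal ℝ T = Ideal.span {f})
    (hregular : T ⊆ closure {x ∈ interior S ∩ T | ∃ i, eval x (pderiv i f) ≠ 0})
    (hzero : ∀ x ∈ T, eval x p = 0) (hnonneg : ∀ x ∈ S, 0 ≤ eval x p) :
    ∃ h, p = f ^ 2 * h ∧ ∀ x ∈ S, 0 ≤ eval x h := by
  obtain ⟨h, rfl⟩ := sq_dvd_of_vanishingIdeal_eq_span hideal hregular hzero hnonneg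
  exact ⟨h, rfl, fun x => eval_nonneg_of_sq_mul_nonneg hf hS hnonneg⟩

theorem totalDegree_sq_mul {R : Type*} [CommRing R] [IsDomain R] {f h : MvPolynomial σ R}
    (hf : f ≠ 0) (hh : h ≠ 0) :
    (f ^ 2 * h).totalDegree = 2 * f.totalDegree + h.totalDegree := by
  rw [totalDegree_mul_of_isDomain (pow_ne_zero 2 hf) hh, pow_two,
    totalDegree_mul_of_isDomain hf hf, two_mul]

end Polynomial

section Simplex

variable {k : ℕ}

theorem ne_zero_of_mem_probSimplex {π : Fin k → ℝ} (hπ : π ∈ probSimplex (Fin k)) : k ≠ 0 := by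
  rintro rfl
  simpa using hπ.2

theorem liftProj_mem_probSimplex (hk : k ≠ 0) {x : Fin (k - 1) → ℝ} (hx : x ∈ projSimplex k) :
    liftProj k x ∈ probSimplex (Fin k) := by
  obtain ⟨m, rfl⟩ := Nat.exists_eq_succ_of_ne_zero hk
  refine ⟨fun i => ?_, ?_⟩
  · unfold liftProj
    split_ifs
    · exact hx.1 _
    · exact sub_nonneg.2 hx.2
  · simp [Fin.sum_univ_castSucc, liftProj]

theorem projPoint_mem_projSimplex {π : Fin k → ℝ} (hπ : π ∈ probSimplex (Fin k)) :
    projPoint k π ∈ projSimplex k := by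
  obtain ⟨m, rfl⟩ := Nat.exists_eq_succ_of_ne_zero (ne_zero_of_mem_probSimplex hπ)
  refine ⟨fun i => hπ.1 _, ?_⟩
  calc ∑ j, projPoint (m + 1) π j
      ≤ ∑ j : Fin m, π j.castSucc + π (Fin.last m) := le_add_of_nonneg_right (hπ.1 _)
    _ = 1 := (Fin.sum_univ_castSucc π).symm.trans hπ.2

theorem liftProj_projPoint {π : Fin k → ℝ} (hπ : π ∈ probSimplex (Fin k)) :
    liftProj k (projPoint k π) = π := by
  obtain ⟨m, rfl⟩ := Nat.exists_eq_succ_of_ne_zero (ne_zero_of_mem_probSimplex hπ)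
  have hsum : ∑ j : Fin m, π j.castSucc + π (Fin.last m) = 1 :=
    (Fin.sum_univ_castSucc π).symm.trans hπ.2
  funext i
  refine Fin.lastCases ?_ (fun j => ?_) i
  · have hlast : liftProj (m + 1) (projPoint (m + 1) π) (Fin.last m) =
        1 - ∑ j : Fin m, π j.castSucc := by
      simp only [liftProj, Fin.val_last, add_tsub_cancel_right, lt_irrefl, dite_false]
      rfl
    rw [hlast, ← hsum, add_sub_cancel_left]
  · exact dif_pos j.isLt

theorem convex_projSimplex (k : ℕ) : Convex ℝ (projSimplex k) := by
  have hlinear : IsLinearMap ℝ fun x : Fin (k - 1) → ℝ => ∑ i, x i :=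
    ⟨fun x y => sum_add_distrib, fun c x => (mul_sum _ _ _).symm⟩
  exact (convex_Ici (0 : Fin (k - 1) → ℝ)).inter (convex_halfSpace_le hlinear 1)

theorem nonempty_interior_projSimplex (k : ℕ) : (interior (projSimplex k)).Nonempty := by
  have hopen : IsOpen {x : Fin (k - 1) → ℝ | (∀ i, 0 < x i) ∧ ∑ i, x i < 1} := by
    simp only [Set.ofPred_and, Set.ofPred_forall]
    exact (isOpen_iInter_of_finite fun i => isOpen_lt continuous_const (continuous_apply i)).inter
      (isOpen_lt (by fun_prop) continuous_const)
  have hsub : {x : Fin (k - 1) → ℝ | (∀ i, 0 < x i) ∧ ∑ i, x i < 1} ⊆ projSimplex k :=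
    fun x hx => ⟨fun i => (hx.1 i).le, hx.2.le⟩
  refine ⟨fun _ => ((k - 1 : ℕ) + 1 : ℝ)⁻¹,
    interior_maximal hsub hopen ⟨fun _ => by positivity, ?_⟩⟩
  rw [sum_const, card_univ, Fintype.card_fin, nsmul_eq_mul, ← div_eq_mul_inv,
    div_lt_one (by positivity)]
  exact lt_add_one _

theorem projSimplex_subset_closure_interior (k : ℕ) :
    projSimplex k ⊆ closure (interior (projSimplex k)) := by
  rw [(convex_projSimplex k).closure_interior_eq_closure_of_nonempty_interior
    (nonempty_interior_projSimplex k)]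
  exact subset_closure

end Simplex

section PowerPolynomial

open MvPolynomial

/-- The coordinates of `liftProj` as polynomials in the projected coordinates. -/
noncomputable def liftProjPoly (k : ℕ) (i : Fin k) : MvPolynomial (Fin (k - 1)) ℝ :=
  if h : (i : ℕ) < k - 1 then X ⟨i, h⟩ else 1 - ∑ j, X j

theorem eval_liftProjPoly {k : ℕ} (x : Fin (k - 1) → ℝ) (i : Fin k) :
    eval x (liftProjPoly k i) = liftProj k x i := by
  unfold liftProjPoly liftProj
  split_ifs <;> simp

theorem totalDegree_liftProjPoly_le {k : ℕ} (i : Fin k) :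
    (liftProjPoly k i).totalDegree ≤ 1 := by
  unfold liftProjPoly
  split_ifs
  · simp
  · exact (totalDegree_sub _ _).trans
      (max_le (by simp) (totalDegree_finsetSum_le fun j _ => by simp))

/-- The power function of `φ` pulled back along a polynomial parametrization `q` of the
probability vector. -/
noncomputable def powerPoly {ι σ : Type} [Fintype ι] [DecidableEq ι] (n : ℕ) (φ : (ι → ℕ) → ℝ)
    (q : ι → MvPolynomial σ ℝ) : MvPolynomial σ ℝ :=
  ∑ x ∈ countVecs ι n, C (φ x * (Nat.multinomial univ x : ℝ)) * ∏ i, q i ^ x i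

variable {ι σ : Type} [Fintype ι] [DecidableEq ι] {n : ℕ}

theorem eval_powerPoly (φ : (ι → ℕ) → ℝ) (q : ι → MvPolynomial σ ℝ) (y : σ → ℝ) :
    eval y (powerPoly n φ q) = powerFn ι n φ fun i => eval y (q i) := by
  simp [powerPoly, powerFn]

theorem totalDegree_powerPoly_le (φ : (ι → ℕ) → ℝ) {q : ι → MvPolynomial σ ℝ}
    (hq : ∀ i, (q i).totalDegree ≤ 1) : (powerPoly n φ q).totalDegree ≤ n := by
  refine totalDegree_finsetSum_le fun x hx => ?_
  calc (C (φ x * (Nat.multinomial univ x : ℝ)) * ∏ i, q i ^ x i).totalDegree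
      ≤ (∏ i, q i ^ x i).totalDegree := by
        rw [← smul_eq_C_mul]
        exact totalDegree_smul_le _ _
    _ ≤ ∑ i, (q i ^ x i).totalDegree := totalDegree_finsetProd _ _
    _ ≤ ∑ i, x i := sum_le_sum fun i _ =>
        (totalDegree_pow _ _).trans (mul_le_of_le_one_right (Nat.zero_le _) (hq i))
    _ = n := (mem_filter.1 hx).2

theorem eval_powerPoly_liftProjPoly {k : ℕ} (φ : (Fin k → ℕ) → ℝ) (x : Fin (k - 1) → ℝ) :
    eval x (powerPoly n φ (liftProjPoly k)) = powerFn (Fin k) n φ (liftProj k x) := by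
  simp only [eval_powerPoly, eval_liftProjPoly]

end PowerPolynomial

section Tests

open MvPolynomial

/-- The projection `P̃0` of a null hypothesis `P0` to the projected simplex. -/
def projNull (k : ℕ) (P0 : Set (Fin k → ℝ)) : Set (Fin (k - 1) → ℝ) :=
  {π' ∈ projSimplex k | liftProj k π' ∈ P0}

theorem projPoint_mem_projNull {k : ℕ} {P0 : Set (Fin k → ℝ)} {π : Fin k → ℝ}
    (hπ : π ∈ probSimplex (Fin k)) (hπ0 : π ∈ P0) : projPoint k π ∈ projNull k P0 :=
  ⟨projPoint_mem_projSimplex hπ, (liftProj_projPoint hπ).symm ▸ hπ0⟩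

variable {k n : ℕ} {P0 : Set (Fin k → ℝ)} {φ : (Fin k → ℕ) → ℝ} {α : ℝ}

theorem powerFn_le_of_unbiased (hunbiased : Unbiased (Fin k) n P0 φ)
    {f : MvPolynomial (Fin (k - 1)) ℝ} (hf : f ≠ 0) (hzero : ∀ x ∈ projNull k P0, eval x f = 0)
    {π0 π : Fin k → ℝ} (hπ0 : π0 ∈ P0) (hπ : π ∈ probSimplex (Fin k)) :
    powerFn (Fin k) n φ π0 ≤ powerFn (Fin k) n φ π := by
  rw [← liftProj_projPoint hπ, ← eval_powerPoly_liftProjPoly]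
  refine le_eval_of_forall_eval_ne_zero hf (projSimplex_subset_closure_interior k)
    (fun x hx hfx => ?_) (projPoint_mem_projSimplex hπ)
  rw [eval_powerPoly_liftProjPoly]
  have hx_alt : liftProj k x ∉ P0 := fun hx0 => hfx (hzero x ⟨hx, hx0⟩)
  exact hunbiased π0 hπ0 _
    ⟨liftProj_mem_probSimplex (ne_zero_of_mem_probSimplex hπ) hx, hx_alt⟩

theorem powerFn_eq_of_hasSize {ι : Type} [Fintype ι] [DecidableEq ι] {P0 : Set (ι → ℝ)}
    {φ : (ι → ℕ) → ℝ} (hsize : HasSize ι n P0 α φ)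
    (hle : ∀ π ∈ P0, ∀ π' ∈ P0, powerFn ι n φ π ≤ powerFn ι n φ π') {π : ι → ℝ} (hπ : π ∈ P0) :
    powerFn ι n φ π = α :=
  le_antisymm (hsize.1 (Set.mem_image_of_mem _ hπ))
    (hsize.2 (Set.forall_mem_image.2 fun π' hπ' => hle π' hπ' π hπ))

theorem powerPoly_sub_C_ne_zero (hnonconst : ∃ π ∈ probSimplex (Fin k),
      ∃ π' ∈ probSimplex (Fin k), powerFn (Fin k) n φ π ≠ powerFn (Fin k) n φ π') :
    powerPoly n φ (liftProjPoly k) - C α ≠ 0 := by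
  intro hconst
  obtain ⟨π, hπ, π', hπ', hne⟩ := hnonconst
  have powerFn_eq : ∀ ρ ∈ probSimplex (Fin k), powerFn (Fin k) n φ ρ = α := fun ρ hρ => by
    rw [← liftProj_projPoint hρ, ← eval_powerPoly_liftProjPoly, sub_eq_zero.1 hconst, eval_C]
  exact hne ((powerFn_eq π hπ).trans (powerFn_eq π' hπ').symm)

theorem stmt_12_general (hP0 : P0 ⊆ probSimplex (Fin k)) (hne : P0.Nonempty)
    {f : MvPolynomial (Fin (k - 1)) ℝ} (hideal : vanishingIdeal ℝ (projNull k P0) = Ideal.span {f})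
    (hregular : projNull k P0 ⊆
      closure {x ∈ interior (projSimplex k) ∩ projNull k P0 | ∃ i, eval x (pderiv i f) ≠ 0})
    (hNTUB : IsNTUB (Fin k) n P0 φ) (hsize : HasSize (Fin k) n P0 α φ) :
    ∃ h : MvPolynomial (Fin (k - 1)) ℝ,
      2 * f.totalDegree + h.totalDegree ≤ n ∧
      (∀ x ∈ projSimplex k, 0 ≤ eval x h) ∧
      (∀ x, powerFn (Fin k) n φ (liftProj k x) = eval x f ^ 2 * eval x h + α) ∧
      (IsSUB (Fin k) n P0 φ → ∀ x ∈ projSimplex k \ projNull k P0, 0 < eval x h) := by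
  obtain ⟨π0, hπ0⟩ := hne
  have hk : k ≠ 0 := ne_zero_of_mem_probSimplex (hP0 hπ0)
  have hf : f ≠ 0 :=
    ne_zero_of_subset_closure_regular ⟨_, projPoint_mem_projNull (hP0 hπ0) hπ0⟩ hregular
  have hf_zero : ∀ x ∈ projNull k P0, eval x f = 0 :=
    (hideal ▸ Ideal.mem_span_singleton_self f : f ∈ vanishingIdeal ℝ (projNull k P0))
  have power_min : ∀ π ∈ P0, ∀ π' ∈ probSimplex (Fin k),
      powerFn (Fin k) n φ π ≤ powerFn (Fin k) n φ π' := fun _ hπ _ hπ' =>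
    powerFn_le_of_unbiased hNTUB.1 hf hf_zero hπ hπ'
  have power_null : ∀ π ∈ P0, powerFn (Fin k) n φ π = α := fun π hπ =>
    powerFn_eq_of_hasSize hsize (fun π hπ π' hπ' => power_min π hπ π' (hP0 hπ')) hπ
  set p := powerPoly n φ (liftProjPoly k) - C α with hp
  have eval_p : ∀ x, eval x p = powerFn (Fin k) n φ (liftProj k x) - α := fun x => by
    rw [hp, map_sub, eval_C, eval_powerPoly_liftProjPoly]
  have p_nonneg : ∀ x ∈ projSimplex k, 0 ≤ eval x p := fun x hx => by
    rw [eval_p, sub_nonneg, ← power_null π0 hπ0]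
    exact power_min π0 hπ0 _ (liftProj_mem_probSimplex hk hx)
  have p_zero : ∀ x ∈ projNull k P0, eval x p = 0 := fun x hx => by
    rw [eval_p, power_null _ hx.2, sub_self]
  obtain ⟨h, hph, h_nonneg⟩ := exists_eq_sq_mul_nonneg hf (projSimplex_subset_closure_interior k)
    hideal hregular p_zero p_nonneg
  have power_eq : ∀ x, powerFn (Fin k) n φ (liftProj k x) = eval x f ^ 2 * eval x h + α :=
    fun x => by rw [← map_pow, ← map_mul, ← hph, eval_p, sub_add_cancel]
  refine ⟨h, ?_, h_nonneg, power_eq, ?_⟩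
  · have hp_ne : p ≠ 0 := powerPoly_sub_C_ne_zero hNTUB.2
    have hh : h ≠ 0 := right_ne_zero_of_mul (hph ▸ hp_ne)
    rw [← totalDegree_sq_mul hf hh, ← hph]
    exact (totalDegree_sub_C_le _ _).trans
      (totalDegree_powerPoly_le φ totalDegree_liftProjPoly_le)
  · rintro hSUB x ⟨hx, hx0⟩
    have hlt := hSUB π0 hπ0 _ ⟨liftProj_mem_probSimplex hk hx, fun hx1 => hx0 ⟨hx, hx1⟩⟩
    rw [power_null π0 hπ0, power_eq, lt_add_iff_pos_left] at hlt
    exact pos_of_mul_pos_right hlt (sq_nonneg _)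

end Tests

/-- for a principal vanishing ideal `⟨f⟩` with nonvanishing gradient on the
null set, every size-α NTUB power function has the form `f²·h + α` with `h ≥ 0` on the
projected simplex (and `h > 0` off the null set when the test is SUB). -/
theorem stmt_12 (k n : ℕ) (hk : 2 ≤ k) (hn : 1 ≤ n)
    (G : Set (MvPolynomial (Fin k) ℝ)) (P0 : Set (Fin k → ℝ))
    (hP0 : P0 = probSimplex (Fin k) ∩ {π | ∀ g ∈ G, MvPolynomial.eval π g = 0})
    (hne : P0.Nonempty) (hneq : P0 ≠ probSimplex (Fin k))
    (Pt0 : Set (Fin (k - 1) → ℝ))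
    (hPt0 : Pt0 = {π' ∈ projSimplex k | liftProj k π' ∈ P0})
    (hclos : closure (interior (projSimplex k) ∩ Pt0) = Pt0)
    (f : MvPolynomial (Fin (k - 1)) ℝ)
    (hprincipal : ∀ h : MvPolynomial (Fin (k - 1)) ℝ,
      (∀ π' ∈ Pt0, MvPolynomial.eval π' h = 0) ↔ h ∈ Ideal.span {f})
    (hgrad : ∀ π' ∈ Pt0, ∃ i, MvPolynomial.eval π' (MvPolynomial.pderiv i f) ≠ 0)
    (α : ℝ) (φ : (Fin k → ℕ) → ℝ)
    (hφ : IsTest (Fin k) n φ) (hNTUB : IsNTUB (Fin k) n P0 φ)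
    (hsize : HasSize (Fin k) n P0 α φ) :
    ∃ h : MvPolynomial (Fin (k - 1)) ℝ,
      h.totalDegree ≤ n - 2 * f.totalDegree ∧
      (∀ π' ∈ projSimplex k, 0 ≤ MvPolynomial.eval π' h) ∧
      (∀ π' : Fin (k - 1) → ℝ,
        powerFn (Fin k) n φ (liftProj k π') =
          (MvPolynomial.eval π' f) ^ 2 * MvPolynomial.eval π' h + α) ∧
      (IsSUB (Fin k) n P0 φ →
        ∀ π' ∈ projSimplex k \ Pt0, 0 < MvPolynomial.eval π' h) := by
  subst hPt0
  have hideal : MvPolynomial.vanishingIdeal ℝ (projNull k P0) = Ideal.span {f} :=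
    Ideal.ext hprincipal
  obtain ⟨h, hdeg, hh⟩ := stmt_12_general (hP0.trans_subset Set.inter_subset_left) hne hideal
    (hclos.ge.trans (closure_mono fun x hx => ⟨hx, hgrad x hx.2⟩)) hNTUB hsize
  exact ⟨h, Nat.le_sub_of_add_le' hdeg, hh⟩
end
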